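/- (Lemma 2, equation (25)) u_1^† R u_3 = Σ_{k=1}^{K} σ_k² · c_tx,k · a_rx,k. -/

import Mathlib

open scoped BigOperators

/-- Steering vector `a(ε) ∈ ℂ^{n+1}` with entries `exp(j·i·ε)`, `i = 0,…,n`. -/
noncomputable def steer (n : ℕ) (ε : ℝ) : Fin (n + 1) → ℂ :=
  fun i => Complex.exp (Complex.I * ((i : ℕ) : ℂ) * (ε : ℂ))

/-- The vector `E(η_1,…,η_m) ∈ ℂ^{m+1}` defined recursively by
`E(η_1) = (1, −exp(j·η_1))` and
`E(η_1,…,η_p) = (E(η_1,…,η_{p−1}), 0) − exp(j·η_p)·(0, E(η_1,…,η_{p−1}))`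
(with base case `E() = (1)`, which reproduces the stated base case at `m = 1`). -/
noncomputable def Evec : (m : ℕ) → (Fin m → ℝ) → (Fin (m + 1) → ℂ)
  | 0, _ => fun _ => 1
  | m + 1, η => fun i =>
      Fin.snoc (α := fun _ => ℂ) (Evec m fun j => η j.castSucc) 0 i -
        Complex.exp (Complex.I * (η (Fin.last m) : ℂ)) *
          Fin.cons (α := fun _ => ℂ) 0 (Evec m fun j => η j.castSucc) i

/-- The cyclic down-shift matrix on `ℂ^{n+1}`: `(Lv)_0 = v_n`, `(Lv)_i = v_{i−1}` for `i ≥ 1`. -/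
def Lmat (n : ℕ) : Matrix (Fin (n + 1)) (Fin (n + 1)) ℂ :=
  Matrix.of fun i l => if l = i - 1 then 1 else 0

/-- Kronecker product of vectors: `(v ⊗ w)_{(i,l)} = v_i · w_l`. -/
def kron {a b : Type*} (v : a → ℂ) (w : b → ℂ) : a × b → ℂ :=
  fun p => v p.1 * w p.2

/-- `x^† y = Σ_i conj(x_i) · y_i`. -/
noncomputable def ip {n : Type*} [Fintype n] (x y : n → ℂ) : ℂ :=
  ∑ i, (starRingEnd ℂ) (x i) * y i

/-- `x^† M y = Σ_{i,l} conj(x_i) · M_{i,l} · y_l`. -/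
noncomputable def qf {n : Type*} [Fintype n] (x : n → ℂ) (M : Matrix n n ℂ) (y : n → ℂ) : ℂ :=
  ∑ i, ∑ l, (starRingEnd ℂ) (x i) * M i l * y l

/-- `E(η_1,…,η_Kp) ∈ ℂ^{Kp+1}` padded with a trailing zero, giving a vector in `ℂ^{Kp+2}`. -/
noncomputable def Epad (Kp : ℕ) (η : Fin Kp → ℝ) : Fin (Kp + 2) → ℂ :=
  Fin.snoc (Evec Kp η) 0

/-- `u_0 = Ẽ_tx ⊗ Ẽ_rx`. -/
noncomputable def u0 (Kp : ℕ) (ηt ηr : Fin Kp → ℝ) : Fin (Kp + 2) × Fin (Kp + 2) → ℂ :=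
  kron (Epad Kp ηt) (Epad Kp ηr)

/-- `u_1 = Ẽ_tx ⊗ (L·Ẽ_rx)`. -/
noncomputable def u1 (Kp : ℕ) (ηt ηr : Fin Kp → ℝ) : Fin (Kp + 2) × Fin (Kp + 2) → ℂ :=
  kron (Epad Kp ηt) ((Lmat (Kp + 1)).mulVec (Epad Kp ηr))

/-- `u_2 = (L·Ẽ_tx) ⊗ Ẽ_rx`. -/
noncomputable def u2 (Kp : ℕ) (ηt ηr : Fin Kp → ℝ) : Fin (Kp + 2) × Fin (Kp + 2) → ℂ :=
  kron ((Lmat (Kp + 1)).mulVec (Epad Kp ηt)) (Epad Kp ηr)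

/-- `u_3 = (L·Ẽ_tx) ⊗ (L·Ẽ_rx)`. -/
noncomputable def u3 (Kp : ℕ) (ηt ηr : Fin Kp → ℝ) : Fin (Kp + 2) × Fin (Kp + 2) → ℂ :=
  kron ((Lmat (Kp + 1)).mulVec (Epad Kp ηt)) ((Lmat (Kp + 1)).mulVec (Epad Kp ηr))

/-- The noiseless auto-correlation matrix `R = Σ_{k=1}^K σ_k² A_k A_k^†`, where
`A_k = a(ε_tx,k) ⊗ a(ε_rx,k)` and `σsq k` is the power `σ_k²`. -/
noncomputable def Rmat (K : ℕ) (εtx εrx σsq : Fin K → ℝ) :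
    Matrix (Fin (K + 1) × Fin (K + 1)) (Fin (K + 1) × Fin (K + 1)) ℂ :=
  Matrix.of fun p q => ∑ k, (σsq k : ℂ) *
    kron (steer K (εtx k)) (steer K (εrx k)) p *
    (starRingEnd ℂ) (kron (steer K (εtx k)) (steer K (εrx k)) q)

/-- The rank-one matrix `R_ε = a(ε) a(ε)^† ∈ ℂ^{(Kp+2)×(Kp+2)}`. -/
noncomputable def Rsingle (Kp : ℕ) (ε : ℝ) : Matrix (Fin (Kp + 2)) (Fin (Kp + 2)) ℂ :=
  Matrix.of fun i l => steer (Kp + 1) ε i * (starRingEnd ℂ) (steer (Kp + 1) ε l)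

/-- The iDEA cost `Q_tx(φ) = (u_1 − exp(j·φ)·u_3)^† R (u_1 − exp(j·φ)·u_3)`. -/
noncomputable def Qcost (Kp : ℕ) (εtx εrx σsq : Fin (Kp + 1) → ℝ)
    (ηt ηr : Fin Kp → ℝ) (φ : ℝ) : ℂ :=
  qf (u1 Kp ηt ηr - Complex.exp (Complex.I * (φ : ℂ)) • u3 Kp ηt ηr)
    (Rmat (Kp + 1) εtx εrx σsq)
    (u1 Kp ηt ηr - Complex.exp (Complex.I * (φ : ℂ)) • u3 Kp ηt ηr)

/-- The closed-form value `4^{2K−1} · Σ_k σ_k² sin²((ε_tx,k − φ)/2) ∏_m sin²((ε_tx,k − ε̂_tx,m)/2)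
∏_n sin²((ε_rx,k − ε̂_rx,n)/2)` (here `K = Kp + 1`, so `2K − 1 = 2·Kp + 1`). -/
noncomputable def Ssum (Kp : ℕ) (εtx εrx σsq : Fin (Kp + 1) → ℝ)
    (ηt ηr : Fin Kp → ℝ) (φ : ℝ) : ℝ :=
  (4 : ℝ) ^ (2 * Kp + 1) * ∑ k, σsq k * Real.sin ((εtx k - φ) / 2) ^ 2 *
    (∏ m, Real.sin ((εtx k - ηt m) / 2) ^ 2) *
    (∏ n, Real.sin ((εrx k - ηr n) / 2) ^ 2)

/-- The `k = K` term of `Ssum`, i.e. the lower bound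
`4^{2K−1} · σ_K² sin²((ε_tx,K − φ)/2) ∏_m sin²((ε_tx,K − ε̂_tx,m)/2) ∏_n sin²((ε_rx,K − ε̂_rx,n)/2)`. -/
noncomputable def Slb (Kp : ℕ) (εtx εrx σsq : Fin (Kp + 1) → ℝ)
    (ηt ηr : Fin Kp → ℝ) (φ : ℝ) : ℝ :=
  (4 : ℝ) ^ (2 * Kp + 1) * σsq (Fin.last Kp) *
    Real.sin ((εtx (Fin.last Kp) - φ) / 2) ^ 2 *
    (∏ m, Real.sin ((εtx (Fin.last Kp) - ηt m) / 2) ^ 2) *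
    (∏ n, Real.sin ((εrx (Fin.last Kp) - ηr n) / 2) ^ 2)

theorem qf_single (Kp : ℕ) (ε : ℝ) (x y : Fin (Kp + 2) → ℂ) :
    qf x (Rsingle Kp ε) y = ip x (steer (Kp + 1) ε) * ip (steer (Kp + 1) ε) y := by
  unfold qf ip Rsingle
  rw [Finset.sum_mul_sum]
  refine Finset.sum_congr rfl fun i _ => Finset.sum_congr rfl fun l _ => ?_
  simp only [Matrix.of_apply]
  ring

theorem qf_mul (n : ℕ) (M N : Matrix (Fin n) (Fin n) ℂ) (x y : Fin n → ℂ) :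
    qf x (M * N) y = qf x M (N.mulVec y) := by
  have h : ∀ (A : Matrix (Fin n) (Fin n) ℂ) (z : Fin n → ℂ),
      qf x A z = ∑ i, (starRingEnd ℂ) (x i) * A.mulVec z i := by
    intro A z
    unfold qf
    refine Finset.sum_congr rfl fun i _ => ?_
    simp only [Matrix.mulVec, dotProduct, Finset.mul_sum, mul_assoc]
  rw [h, h, Matrix.mulVec_mulVec]

theorem ip_kron {n : ℕ} (x x' y y' : Fin n → ℂ) :
    ip (kron x x') (kron y y') = ip x y * ip x' y' := by
  unfold ip kron
  rw [Finset.sum_mul_sum, Fintype.sum_prod_type]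
  refine Finset.sum_congr rfl fun i _ => Finset.sum_congr rfl fun l _ => ?_
  simp only [map_mul]
  ring

theorem qf_Rmat (K : ℕ) (εtx εrx σsq : Fin K → ℝ) (x y : Fin (K + 1) × Fin (K + 1) → ℂ) :
    qf x (Rmat K εtx εrx σsq) y = ∑ k, (σsq k : ℂ) *
      (ip x (kron (steer K (εtx k)) (steer K (εrx k))) *
        ip (kron (steer K (εtx k)) (steer K (εrx k))) y) := by
  unfold qf ip Rmat
  simp only [Matrix.of_apply, Finset.mul_sum, Finset.sum_mul]
  conv_lhs => rw [Finset.sum_comm]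
  conv_rhs => rw [Finset.sum_comm]
  refine Finset.sum_congr rfl fun i _ => ?_
  rw [Finset.sum_comm]
  refine Finset.sum_congr rfl fun k _ => Finset.sum_congr rfl fun l _ => ?_
  ring

theorem L_Epad (Kp : ℕ) (η : Fin Kp → ℝ) :
    (Lmat (Kp + 1)).mulVec (Epad Kp η) = Fin.cons (α := fun _ => ℂ) 0 (Evec Kp η) := by
  funext i
  have h : (Lmat (Kp + 1)).mulVec (Epad Kp η) i = Epad Kp η (i - 1) := by
    simp [Matrix.mulVec, dotProduct, Lmat]
  rw [h]
  refine Fin.cases ?_ (fun j => ?_) i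
  · have : (0 : Fin (Kp + 2)) - 1 = Fin.last (Kp + 1) := by
      rw [sub_eq_iff_eq_add]; simp
    rw [this]
    simp [Epad]
  · have : j.succ - 1 = j.castSucc := by
      rw [sub_eq_iff_eq_add]; simp
    rw [this]
    simp [Epad]

theorem steer_succ (n : ℕ) (ε : ℝ) (j : Fin (n + 1)) :
    steer (n + 1) ε j.succ = Complex.exp (Complex.I * ε) * steer (n + 1) ε j.castSucc := by
  unfold steer
  rw [← Complex.exp_add]
  congr 1
  simp
  ring

theorem shift_ip (Kp : ℕ) (ε : ℝ) (η : Fin Kp → ℝ) :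
    ip ((Lmat (Kp + 1)).mulVec (Epad Kp η)) (steer (Kp + 1) ε) =
      Complex.exp (Complex.I * ε) * ip (Epad Kp η) (steer (Kp + 1) ε) := by
  rw [L_Epad]
  unfold ip
  conv_lhs => rw [Fin.sum_univ_succ]
  conv_rhs => rw [Fin.sum_univ_castSucc]
  simp only [Fin.cons_zero, Fin.cons_succ, Epad, Fin.snoc_castSucc, Fin.snoc_last, steer_succ,
    map_zero, zero_mul, zero_add, add_zero, Finset.mul_sum]
  exact Finset.sum_congr rfl fun i _ => by ring

theorem ip_conj {n : ℕ} (x y : Fin n → ℂ) : ip x y = (starRingEnd ℂ) (ip y x) := by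
  simp [ip, mul_comm]

theorem shift_pair (Kp : ℕ) (ε : ℝ) (η : Fin Kp → ℝ) :
    ip ((Lmat (Kp + 1)).mulVec (Epad Kp η)) (steer (Kp + 1) ε) *
      ip (steer (Kp + 1) ε) ((Lmat (Kp + 1)).mulVec (Epad Kp η)) =
    ip (Epad Kp η) (steer (Kp + 1) ε) * ip (steer (Kp + 1) ε) (Epad Kp η) := by
  rw [ip_conj (steer (Kp + 1) ε), ip_conj (steer (Kp + 1) ε), shift_ip, map_mul,
    ← Complex.exp_conj]
  have h : Complex.exp (Complex.I * ε) * Complex.exp ((starRingEnd ℂ) (Complex.I * ε)) = 1 := by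
    rw [← Complex.exp_add]
    simp
  linear_combination (ip (Epad Kp η) (steer (Kp + 1) ε) *
    (starRingEnd ℂ) (ip (Epad Kp η) (steer (Kp + 1) ε))) * h

/-- Lemma 2, eq. (25): u_1^† R u_3 = Σ_k σ_k² · c_tx,k · a_rx,k. -/
theorem statement13 (Kp : ℕ) (hKp : 1 ≤ Kp) (εtx εrx : Fin (Kp + 1) → ℝ)
    (σsq : Fin (Kp + 1) → ℝ) (hσ : ∀ k, 0 < σsq k) (ηt ηr : Fin Kp → ℝ) :
    qf (u1 Kp ηt ηr) (Rmat (Kp + 1) εtx εrx σsq) (u3 Kp ηt ηr) =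
      ∑ k, (σsq k : ℂ) *
        (qf (Epad Kp ηt) (Rsingle Kp (εtx k) * Lmat (Kp + 1)) (Epad Kp ηt)) *
        (qf (Epad Kp ηr) (Rsingle Kp (εrx k)) (Epad Kp ηr)) := by
  rw [qf_Rmat]
  refine Finset.sum_congr rfl fun k _ => ?_
  rw [qf_mul, qf_single, qf_single, u1, u3, ip_kron, ip_kron, ← shift_pair]
  ring
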